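/- Let v₁, v₂, v₃, v₄, v₅ be nonzero vectors in ℂ³ such that no three of them are linearly dependent (i.e., any three of them are linearly independent, meaning no three of the corresponding points of ℂℙ² are collinear). If Q₁ and Q₂ are nonzero quadratic forms on ℂ³ with Q₁(vᵢ) = 0 and Q₂(vᵢ) = 0 for all i = 1,…,5, then Q₂ = c · Q₁ for some scalar c ∈ ℂ. -/

import Mathlib

lemma li_three {x y z : Fin 3 → ℂ} (h : LinearIndependent ℂ ![x, y, z]) (a b c : ℂ)
    (e : a • x + b • y + c • z = 0) : a = 0 ∧ b = 0 ∧ c = 0 := by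
  rw [Fintype.linearIndependent_iff] at h
  have := h ![a, b, c] (by simpa [Fin.sum_univ_three] using e)
  exact ⟨this 0, this 1, this 2⟩

lemma span_three {x y z : Fin 3 → ℂ} (h : LinearIndependent ℂ ![x, y, z]) (w : Fin 3 → ℂ) :
    ∃ a b c : ℂ, w = a • x + b • y + c • z := by
  let B := basisOfLinearIndependentOfCardEqFinrank h (by simp)
  have hB := B.sum_repr w
  refine ⟨B.repr w 0, B.repr w 1, B.repr w 2, ?_⟩
  rw [Fin.sum_univ_three] at hB
  simpa [B] using hB.symm

lemma quad_three (Q : QuadraticForm ℂ (Fin 3 → ℂ)) {x y z : Fin 3 → ℂ}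
    (hx : Q x = 0) (hy : Q y = 0) (hz : Q z = 0) (a b c : ℂ) :
    Q (a • x + b • y + c • z) = a * b * QuadraticMap.polar Q x y
      + a * c * QuadraticMap.polar Q x z + b * c * QuadraticMap.polar Q y z := by
  rw [QuadraticMap.map_add Q (a • x + b • y), QuadraticMap.map_add Q (a • x)]
  simp only [QuadraticMap.polar_add_left, QuadraticMap.polar_smul_left,
    QuadraticMap.polar_smul_right, QuadraticMap.map_smul, hx, hy, hz, smul_eq_mul]
  ring

/-- Uniqueness of the conic through five points of ℂℙ² in general position:
if no three of five nonzero vectors in ℂ³ are linearly dependent, then any two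
nonzero quadratic forms vanishing on all five are proportional. -/
theorem conic_through_five_points_unique
    (v : Fin 5 → (Fin 3 → ℂ)) (hv : ∀ i, v i ≠ 0)
    (hind : ∀ i j k : Fin 5, i ≠ j → i ≠ k → j ≠ k →
      LinearIndependent ℂ ![v i, v j, v k])
    (Q₁ Q₂ : QuadraticForm ℂ (Fin 3 → ℂ))
    (h1 : Q₁ ≠ 0) (h2 : Q₂ ≠ 0)
    (hQ₁ : ∀ i, Q₁ (v i) = 0) (hQ₂ : ∀ i, Q₂ (v i) = 0) :
    ∃ c : ℂ, Q₂ = c • Q₁ := by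
  have h012 := hind 0 1 2 (by decide) (by decide) (by decide)
  obtain ⟨a0, a1, a2, ha⟩ := span_three h012 (v 3)
  obtain ⟨b0, b1, b2, hb⟩ := span_three h012 (v 4)
  have ha2 : a2 ≠ 0 := by
    rintro rfl
    have := li_three (hind 0 1 3 (by decide) (by decide) (by decide)) a0 a1 (-1)
      (by rw [ha]; module)
    simp at this
  have hb2 : b2 ≠ 0 := by
    rintro rfl
    have := li_three (hind 0 1 4 (by decide) (by decide) (by decide)) b0 b1 (-1)
      (by rw [hb]; module)
    simp at this
  have hm : a0 * b1 - a1 * b0 ≠ 0 := by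
    intro hm
    have h234 := hind 2 3 4 (by decide) (by decide) (by decide)
    have e0 := li_three h234 (-(b0 * a2 - a0 * b2)) b0 (-a0) (by
      have : (-(b0 * a2 - a0 * b2)) • v 2 + b0 • v 3 + (-a0) • v 4
          = (-(a0 * b1 - a1 * b0)) • v 1 := by rw [ha, hb]; module
      rw [this, hm]; simp)
    have e1 := li_three h234 (-(b1 * a2 - a1 * b2)) b1 (-a1) (by
      have : (-(b1 * a2 - a1 * b2)) • v 2 + b1 • v 3 + (-a1) • v 4
          = (a0 * b1 - a1 * b0) • v 0 := by rw [ha, hb]; module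
      rw [this, hm]; simp)
    have z0 : a0 = 0 := by simpa using e0.2.2
    have z1 : a1 = 0 := by simpa using e1.2.2
    have := li_three h234 (-a2) 1 0 (by rw [ha, z0, z1]; module)
    simp at this
  have hu : a2 * b2 * (a0 * b1 - a1 * b0) ≠ 0 := mul_ne_zero (mul_ne_zero ha2 hb2) hm
  -- all polar values are determined by the first one
  have key : ∃ s t : ℂ, ∀ Q : QuadraticForm ℂ (Fin 3 → ℂ), (∀ i, Q (v i) = 0) → ∀ x y z : ℂ,
      Q (x • v 0 + y • v 1 + z • v 2)
        = (x * y + x * z * s + y * z * t) * QuadraticMap.polar Q (v 0) (v 1) := by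
    refine ⟨-(a1 * b1 * (a0 * b2 - b0 * a2)) / (a2 * b2 * (a0 * b1 - a1 * b0)),
      (a0 * b0 * (a1 * b2 - b1 * a2)) / (a2 * b2 * (a0 * b1 - a1 * b0)), ?_⟩
    intro Q hQ x y z
    have e3 := hQ 3
    have e4 := hQ 4
    rw [ha, quad_three Q (hQ 0) (hQ 1) (hQ 2)] at e3
    rw [hb, quad_three Q (hQ 0) (hQ 1) (hQ 2)] at e4
    rw [quad_three Q (hQ 0) (hQ 1) (hQ 2)]
    generalize QuadraticMap.polar Q (v 0) (v 1) = p at *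
    generalize QuadraticMap.polar Q (v 0) (v 2) = q at *
    generalize QuadraticMap.polar Q (v 1) (v 2) = r at *
    have hq : q = -(a1 * b1 * (a0 * b2 - b0 * a2)) / (a2 * b2 * (a0 * b1 - a1 * b0)) * p := by
      rw [div_mul_eq_mul_div, eq_div_iff hu]
      linear_combination b1 * b2 * e3 - a1 * a2 * e4
    have hr : r = (a0 * b0 * (a1 * b2 - b1 * a2)) / (a2 * b2 * (a0 * b1 - a1 * b0)) * p := by
      rw [div_mul_eq_mul_div, eq_div_iff hu]
      linear_combination -b0 * b2 * e3 + a0 * a2 * e4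
    linear_combination x * z * hq + y * z * hr
  obtain ⟨s, t, key⟩ := key
  have hp : QuadraticMap.polar Q₁ (v 0) (v 1) ≠ 0 := by
    intro hp
    apply h1
    ext w
    obtain ⟨x, y, z, rfl⟩ := span_three h012 w
    rw [key Q₁ hQ₁, hp]; simp
  refine ⟨QuadraticMap.polar Q₂ (v 0) (v 1) / QuadraticMap.polar Q₁ (v 0) (v 1), ?_⟩
  ext w
  obtain ⟨x, y, z, rfl⟩ := span_three h012 w
  rw [QuadraticMap.smul_apply, key Q₁ hQ₁, key Q₂ hQ₂, smul_eq_mul]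
  field_simp
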